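/- For every d = (d_1,…,d_r) ∈ Z^r there exist a unique element w ∈ W_{Δ_P} and unique integers a_1,…,a_r such that gr(w) + Σ_{i=1}^r a_i·gr(q_{α_i^∨}) = Σ_{i=1}^r d_i e_i in Z^{r+1}. Moreover, if d_i ≥ 0 for all i, then a_i ≥ 0 for all i. -/

import Mathlib

open scoped BigOperators

/-- A reduced crystallographic root system with a fixed base `α_1, …, α_n` of simple
roots, bundled with its Weyl group `W`.  A root `γ` is recorded by its integer
coordinate vector in the basis of simple roots (so the `i`-th simple root is
`Pi.single i 1`), and `cor γ` is the coordinate vector of the coroot `γ^∨` in the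
basis of simple coroots (hence `cor γ i = ⟨χ_i, γ^∨⟩` for the fundamental weights
`χ_i`).  `A i j = ⟨α_i, α_j^∨⟩` is the Cartan matrix, `σ γ` is the reflection `s_γ`
and `act` is the action of the Weyl group on the root lattice. -/
structure RootSystemData (n : ℕ) where
  A : Fin n → Fin n → ℤ
  R : Finset (Fin n → ℤ)
  cor : (Fin n → ℤ) → (Fin n → ℤ)
  W : Type
  [grp : Group W]
  σ : (Fin n → ℤ) → W
  act : W → (Fin n → ℤ) → (Fin n → ℤ)
  simple_mem : ∀ i : Fin n, (Pi.single i 1 : Fin n → ℤ) ∈ R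
  root_ne_zero : ∀ γ ∈ R, γ ≠ 0
  neg_mem : ∀ γ ∈ R, -γ ∈ R
  pos_or_neg : ∀ γ ∈ R, (∀ i, 0 ≤ γ i) ∨ (∀ i, γ i ≤ 0)
  reduced : ∀ γ ∈ R, ∀ k : ℤ, k • γ ∈ R → k = 1 ∨ k = -1
  cor_simple : ∀ i : Fin n, cor (Pi.single i 1) = Pi.single i 1
  cor_neg : ∀ γ ∈ R, cor (-γ) = -(cor γ)
  pair_self : ∀ γ ∈ R, (∑ i, ∑ j, γ i * A i j * cor γ j) = 2
  act_one : ∀ x, act 1 x = x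
  act_mul : ∀ w w' x, act (w * w') x = act w (act w' x)
  act_refl : ∀ γ ∈ R, ∀ x, act (σ γ) x = x - (∑ i, ∑ j, x i * A i j * cor γ j) • γ
  act_mem : ∀ (w : W), ∀ γ ∈ R, act w γ ∈ R
  cor_refl : ∀ γ ∈ R, ∀ β ∈ R,
    cor (act (σ γ) β) = cor β - (∑ i, ∑ j, γ i * A i j * cor β j) • cor γ
  refl_sq : ∀ γ ∈ R, σ γ * σ γ = 1
  refl_act : ∀ (w : W), ∀ γ ∈ R, σ (act w γ) = w * σ γ * w⁻¹
  act_faithful : ∀ w w' : W, (∀ γ ∈ R, act w γ = act w' γ) → w = w'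
  generated : ∀ w : W, ∃ l : List (Fin n), w = (l.map fun i => σ (Pi.single i 1)).prod

namespace RootSystemData

instance {n : ℕ} (c : RootSystemData n) : Group c.W := c.grp

/-- the pairing `⟨x, λ⟩` between an element `x` of the root lattice (coordinates in
the basis of simple roots) and an element `λ` of the coroot lattice (coordinates in
the basis of simple coroots) -/
def pair {n : ℕ} (c : RootSystemData n) (x lam : Fin n → ℤ) : ℤ :=
  ∑ i, ∑ j, x i * c.A i j * lam j

/-- the `i`-th simple root -/
def sroot {n : ℕ} (_c : RootSystemData n) (i : Fin n) : Fin n → ℤ := Pi.single i 1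

/-- the simple reflection `s_i` -/
def s {n : ℕ} (c : RootSystemData n) (i : Fin n) : c.W := c.σ (c.sroot i)

/-- `s_{α_{t+1}}` for a `0`-based natural number index `t` (`= 1` when out of range) -/
def sN {n : ℕ} (c : RootSystemData n) (t : ℕ) : c.W := if h : t < n then c.s ⟨t, h⟩ else 1

/-- `⟨2ρ, λ⟩ = Σ_{β ∈ R^+} ⟨β, λ⟩`, where `ρ` is the half-sum of the positive roots -/
def pairTwoRho {n : ℕ} (c : RootSystemData n) (lam : Fin n → ℤ) : ℤ :=
  ∑ β ∈ c.R, if ∀ i, 0 ≤ β i then c.pair β lam else 0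

/-- the length of `w ∈ W` with respect to the simple reflections -/
noncomputable def len {n : ℕ} (c : RootSystemData n) (w : c.W) : ℕ :=
  sInf {k | ∃ l : List (Fin n), l.length = k ∧ (l.map c.s).prod = w}

/-- the parabolic subgroup `W_S` generated by the simple reflections indexed by `S` -/
def Wsub {n : ℕ} (c : RootSystemData n) (S : Finset (Fin n)) : Subgroup c.W :=
  Subgroup.closure (c.s '' ↑S)

/-- `w ∈ W_T^S`: `w ∈ W_T` and `w` has minimal length in the coset `w W_S` -/
def MinRep {n : ℕ} (c : RootSystemData n) (T S : Finset (Fin n)) (w : c.W) : Prop :=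
  w ∈ c.Wsub T ∧ ∀ u ∈ c.Wsub S, c.len w ≤ c.len (w * u)

/-- `w` is the longest element of `W_S` -/
def IsLongest {n : ℕ} (c : RootSystemData n) (S : Finset (Fin n)) (w : c.W) : Prop :=
  w ∈ c.Wsub S ∧ ∀ v ∈ c.Wsub S, c.len v ≤ c.len w

end RootSystemData

/-- the support of `γ` is contained in `S`, i.e. `γ` lies in the span of
`{α_i : i ∈ S}` (for a root `γ`, membership in `R_S`) -/
def suppIn {n : ℕ} (S : Finset (Fin n)) (γ : Fin n → ℤ) : Prop :=
  ∀ i, i ∉ S → γ i = 0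

/-- `Δ_j` for `0 ≤ j ≤ r+1`: the index set of the first `j` simple roots for `j ≤ r`,
and all of `Δ` for `j = r+1`.  (Indices of simple roots are `0`-based, so
`α_1, …, α_j` correspond to the indices `0, …, j-1`.) -/
def deltaSet (n r j : ℕ) : Finset (Fin n) :=
  if j = r + 1 then Finset.univ else Finset.univ.filter fun i => (i : ℕ) < j

namespace RootSystemData

/-- `v 0, …, v r` (standing for `v_1, …, v_{r+1}`) is the decomposition of `w`
associated to `(Δ_P, Υ)`:  each `v_i ∈ W_{Δ_i}^{Δ_{i-1}}` and `w = v_{r+1} v_r ⋯ v_1`. -/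
def IsDecomp {n : ℕ} (c : RootSystemData n) (r : ℕ) (w : c.W)
    (v : Fin (r + 1) → c.W) : Prop :=
  (∀ k : Fin (r + 1), c.MinRep (deltaSet n r ((k : ℕ) + 1)) (deltaSet n r (k : ℕ)) (v k)) ∧
    w = (List.ofFn v).reverse.prod

/-- the first `m` simple roots `α_1, …, α_m` form a path of type `A_m`:
`⟨α_i, α_j^∨⟩ = -1` if `|i-j| = 1` and `⟨α_i, α_j^∨⟩ = 0` if `|i-j| ≥ 2`. -/
def PathA {n : ℕ} (c : RootSystemData n) (m : ℕ) : Prop :=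
  ∀ i j : Fin n, (i : ℕ) < m → (j : ℕ) < m →
    (((i : ℕ) + 1 = (j : ℕ) ∨ (j : ℕ) + 1 = (i : ℕ)) → c.A i j = -1) ∧
    ((i : ℕ) + 2 ≤ (j : ℕ) ∨ (j : ℕ) + 2 ≤ (i : ℕ) → c.A i j = 0)

/-- `u_{[k,m]} = s_k s_{k+1} ⋯ s_m` (`1`-based indices; `u_{[k,m]} = 1` for `k > m`) -/
def uu {n : ℕ} (c : RootSystemData n) (k m : ℕ) : c.W :=
  ((List.range' k (m + 1 - k)).map fun t => c.sN (t - 1)).prod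

/-- `u_i^{(m)} = s_{m-i+1} s_{m-i+2} ⋯ s_m` -/
def uElt {n : ℕ} (c : RootSystemData n) (i m : ℕ) : c.W := c.uu (m - i + 1) m

end RootSystemData

/-- strict lexicographic order on `Fin m → ℤ` -/
def lexLT {m : ℕ} (x y : Fin m → ℤ) : Prop :=
  ∃ j, x j < y j ∧ ∀ k, k < j → x k = y k

/-- lexicographic order on `Fin m → ℤ` -/
def lexLE {m : ℕ} (x y : Fin m → ℤ) : Prop := x = y ∨ lexLT x y

/-- the grading `gr(q_{α_{j+1}^∨}) ∈ ℤ^{r+1}` (for the `0`-based index `j < r`), when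
`Δ_P` is of type `A_r`: in `1`-based terms, `gr(q_{α_1^∨}) = 2·e_1` and
`gr(q_{α_j^∨}) = (1-j)·e_{j-1} + (1+j)·e_j` for `2 ≤ j ≤ r`. -/
def grQ (r j : ℕ) : Fin (r + 1) → ℤ := fun k =>
  (if (k : ℕ) = j then (j : ℤ) + 2 else 0) + (if (k : ℕ) + 1 = j then -(j : ℤ) else 0)

/-- the grading `gr(q_λ)` for `λ ∈ Q_P^∨` (coordinates in simple coroots), extended
additively from the `gr(q_{α_j^∨})`, when `Δ_P` is of type `A_r` -/
def grQlam (n r : ℕ) (lam : Fin n → ℤ) : Fin (r + 1) → ℤ :=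
  fun k => ∑ j, lam j * grQ r (j : ℕ) k

/-!
Write `W_m` for the subgroup generated by the first `m` simple reflections.

*Coset representatives.*  For `m < r`, left multiplication by simple reflections permutes the cosets
`u_l^{(m+1)} W_m` with `l ≤ m + 1`, because `u_l^{(m+1)}` carries simple roots to simple roots; so
these cosets exhaust `W_{m+1}`.  By the strong exchange condition, `ℓ(s_j w) = ℓ(w) + 1` whenever
the root `w⁻¹ α_j` is positive.  Building up `u_l^{(m+1)} v` with `v ∈ W_m` one simple reflection at
a time, the roots that occur have coefficient `1` at `α_{m+1}`, hence are positive, and therefore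
`ℓ(u_l^{(m+1)} v) = l + ℓ(v)`.  So the minimal representatives are exactly the `u_l^{(m+1)}`, one
for each length `l ≤ m + 1`.

*Arithmetic.*  With `a_{r+1} = 0`, the equations read
`ℓ(v_k) + (k + 1) a_k = d_k + k a_{k+1}` for `1 ≤ k ≤ r`, together with `ℓ(v_{r+1}) = 0`.  As
`ℓ(v_k)` takes each of the values `0, …, k` exactly once, it is the remainder and `a_k` the quotient
of the right-hand side divided by `k + 1`, and descending recursion determines everything;
if all `d_k` are nonnegative, so are all the quotients.
-/

namespace RootSystemData

variable {n : ℕ} (c : RootSystemData n)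

/-! ### The action on roots -/

theorem s_mul_s (j : Fin n) : c.s j * c.s j = 1 := c.refl_sq _ (c.simple_mem j)

theorem s_inv (j : Fin n) : (c.s j)⁻¹ = c.s j := inv_eq_of_mul_eq_one_left (c.s_mul_s j)

theorem act_inv_eq_iff {w : c.W} {x y : Fin n → ℤ} : c.act w⁻¹ x = y ↔ x = c.act w y := by
  constructor
  · rintro rfl
    rw [← c.act_mul, mul_inv_cancel, c.act_one]
  · rintro rfl
    rw [← c.act_mul, inv_mul_cancel, c.act_one]

theorem act_s (j : Fin n) (x : Fin n → ℤ) :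
    c.act (c.s j) x = x - (∑ i, x i * c.A i j) • c.sroot j := by
  have h := c.act_refl _ (c.simple_mem j) x
  simpa [s, sroot, c.cor_simple, Pi.single_apply j] using h

theorem act_s_sroot (i j : Fin n) :
    c.act (c.s j) (c.sroot i) = c.sroot i - c.A i j • c.sroot j := by
  simp [act_s, sroot, Pi.single_apply]

theorem A_self (j : Fin n) : c.A j j = 2 := by
  simpa [c.cor_simple, Pi.single_apply] using c.pair_self _ (c.simple_mem j)

theorem act_s_self (j : Fin n) : c.act (c.s j) (c.sroot j) = -c.sroot j := by
  rw [act_s_sroot, A_self, two_smul]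
  abel

theorem act_add (w : c.W) (x y : Fin n → ℤ) : c.act w (x + y) = c.act w x + c.act w y := by
  obtain ⟨L, rfl⟩ := c.generated w
  induction L with
  | nil => simp [c.act_one]
  | cons j L ih =>
    rw [List.map_cons, List.prod_cons, c.act_mul, c.act_mul, c.act_mul, ih]
    change c.act (c.s j) _ = c.act (c.s j) _ + c.act (c.s j) _
    simp only [act_s, Pi.add_apply, add_mul, Finset.sum_add_distrib, add_smul]
    abel

theorem act_neg (w : c.W) (x : Fin n → ℤ) : c.act w (-x) = -c.act w x :=
  map_neg (AddMonoidHom.mk' (c.act w) (c.act_add w)) x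

theorem sroot_nonneg (j : Fin n) : 0 ≤ c.sroot j := Pi.single_nonneg.2 zero_le_one

variable {c}

theorem nonneg_of_apply_pos {γ : Fin n → ℤ} (hγ : γ ∈ c.R) {i : Fin n} (hi : 0 < γ i) : 0 ≤ γ :=
  (c.pos_or_neg γ hγ).resolve_right fun h => (h i).not_gt hi

theorem exists_ne_apply_pos {γ : Fin n → ℤ} (hγ : γ ∈ c.R) (hpos : 0 ≤ γ) {j : Fin n}
    (hne : γ ≠ c.sroot j) : ∃ i ≠ j, 0 < γ i := by
  by_contra! h
  have hmul : γ = γ j • c.sroot j := by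
    ext i
    obtain rfl | hi := eq_or_ne i j
    · simp [sroot]
    · simpa [sroot, hi] using (h i hi).antisymm (hpos i)
  rcases c.reduced _ (c.simple_mem j) (γ j) (hmul ▸ hγ) with hj | hj
  · exact hne (by rw [hmul, hj, one_smul])
  · have := hpos j
    simp [hj] at this

/-- The reflection `s_j` changes only the coordinate at `α_j`. -/
theorem act_s_nonneg {γ : Fin n → ℤ} (hγ : γ ∈ c.R) (hpos : 0 ≤ γ) {j : Fin n}
    (hne : γ ≠ c.sroot j) : 0 ≤ c.act (c.s j) γ := by
  obtain ⟨i, hij, hi⟩ := exists_ne_apply_pos hγ hpos hne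
  refine nonneg_of_apply_pos (c.act_mem _ γ hγ) (i := i) ?_
  simpa [act_s, sroot, hij] using hi

/-! ### Length and the exchange condition -/

variable (c) in
theorem exists_reduced_word (w : c.W) :
    ∃ L : List (Fin n), L.length = c.len w ∧ (L.map c.s).prod = w := by
  obtain ⟨L, hL⟩ := c.generated w
  exact Nat.sInf_mem (s := {k | ∃ L : List (Fin n), L.length = k ∧ (L.map c.s).prod = w})
    ⟨_, L, rfl, hL.symm⟩

variable (c) in
theorem len_prod_le (L : List (Fin n)) : c.len (L.map c.s).prod ≤ L.length :=
  Nat.sInf_le ⟨L, rfl, rfl⟩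

theorem len_eq_zero_iff {w : c.W} : c.len w = 0 ↔ w = 1 := by
  constructor
  · intro h
    obtain ⟨L, hL, rfl⟩ := c.exists_reduced_word w
    rw [List.length_eq_zero_iff.1 (hL.trans h), List.map_nil, List.prod_nil]
  · rintro rfl
    exact Nat.le_zero.1 (c.len_prod_le [])

variable (c) in
theorem len_s_mul_le (j : Fin n) (w : c.W) : c.len (c.s j * w) ≤ c.len w + 1 := by
  obtain ⟨L, hL, hw⟩ := c.exists_reduced_word w
  simpa [hL, hw] using c.len_prod_le (j :: L)

/-- The strong exchange condition. -/
theorem exists_word_refl_mul (L : List (Fin n)) {β : Fin n → ℤ} (hβ : β ∈ c.R) (hpos : 0 ≤ β)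
    (hneg : c.act (L.map c.s).prod⁻¹ β ≤ 0) :
    ∃ L' : List (Fin n), L'.length + 1 = L.length ∧
      (L'.map c.s).prod = c.σ β * (L.map c.s).prod := by
  induction L generalizing β with
  | nil =>
    rw [List.map_nil, List.prod_nil, inv_one, c.act_one] at hneg
    exact absurd (hneg.antisymm hpos) (c.root_ne_zero β hβ)
  | cons i L ih =>
    rw [List.map_cons, List.prod_cons] at hneg ⊢
    by_cases hi : β = c.sroot i
    · exact ⟨L, rfl, by rw [hi, ← s, ← mul_assoc, s_mul_s, one_mul]⟩
    · rw [mul_inv_rev, s_inv, c.act_mul] at hneg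
      obtain ⟨L', hlen, hprod⟩ := ih (c.act_mem _ β hβ) (act_s_nonneg hβ hpos hi) hneg
      refine ⟨i :: L', by simp [hlen], ?_⟩
      rw [List.map_cons, List.prod_cons, hprod, c.refl_act _ β hβ]
      simp only [← mul_assoc, s_mul_s, s_inv, one_mul]

theorem len_refl_mul_lt {w : c.W} {β : Fin n → ℤ} (hβ : β ∈ c.R) (hpos : 0 ≤ β)
    (hneg : c.act w⁻¹ β ≤ 0) : c.len (c.σ β * w) < c.len w := by
  obtain ⟨L, hL, rfl⟩ := c.exists_reduced_word w
  obtain ⟨L', hlen, hprod⟩ := exists_word_refl_mul L hβ hpos hneg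
  have := c.len_prod_le L'
  rw [hprod] at this
  omega

theorem len_s_mul {j : Fin n} {w : c.W} (h : 0 ≤ c.act w⁻¹ (c.sroot j)) :
    c.len (c.s j * w) = c.len w + 1 := by
  have hneg : c.act (c.s j * w)⁻¹ (c.sroot j) ≤ 0 := by
    rw [mul_inv_rev, c.act_mul, s_inv, act_s_self, act_neg]
    exact neg_nonpos.2 h
  have hlt : c.len (c.s j * (c.s j * w)) < c.len (c.s j * w) :=
    len_refl_mul_lt (c.simple_mem j) (c.sroot_nonneg j) hneg
  rw [← mul_assoc, s_mul_s, one_mul] at hlt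
  exact (c.len_s_mul_le j w).antisymm hlt

/-! ### Parabolic subgroups -/

theorem s_mem_Wsub {S : Finset (Fin n)} {j : Fin n} (h : j ∈ S) : c.s j ∈ c.Wsub S :=
  Subgroup.subset_closure ⟨j, h, rfl⟩

theorem Wsub_mono {S T : Finset (Fin n)} (h : S ⊆ T) : c.Wsub S ≤ c.Wsub T :=
  Subgroup.closure_mono (Set.image_mono (Finset.coe_subset.2 h))

@[elab_as_elim]
theorem Wsub_induction {S : Finset (Fin n)} {p : (w : c.W) → w ∈ c.Wsub S → Prop}
    (one : p 1 (one_mem _))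
    (s_mul : ∀ (j : Fin n) (hj : j ∈ S) (w : c.W) (hw : w ∈ c.Wsub S), p w hw →
      p (c.s j * w) (mul_mem (s_mem_Wsub hj) hw))
    {w : c.W} (hw : w ∈ c.Wsub S) : p w hw := by
  induction hw using Subgroup.closure_induction_left with
  | one => exact one
  | mul_left x hx w hw ih =>
    obtain ⟨j, hj, rfl⟩ := hx
    exact s_mul j hj w hw ih
  | inv_mul_cancel x hx w hw ih =>
    obtain ⟨j, hj, rfl⟩ := hx
    simp only [s_inv]
    exact s_mul j hj w hw ih

theorem act_apply_of_mem_Wsub {S : Finset (Fin n)} {w : c.W} (hw : w ∈ c.Wsub S) {i : Fin n}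
    (hi : i ∉ S) (x : Fin n → ℤ) : c.act w x i = x i := by
  induction hw using Wsub_induction with
  | one => rw [c.act_one]
  | s_mul j hj w _ ih =>
    have hij : i ≠ j := by
      rintro rfl
      exact hi hj
    simp [c.act_mul, act_s, sroot, hij, ih]

end RootSystemData

/-- The index set `{α_1, …, α_m}` of the first `m` simple roots.  Unlike `deltaSet n r m` it does
not depend on `r`; the two agree for `m ≤ r`. -/
def firstSimple (n m : ℕ) : Finset (Fin n) := {i | (i : ℕ) < m}

@[simp]
theorem mem_firstSimple {n m : ℕ} {i : Fin n} : i ∈ firstSimple n m ↔ (i : ℕ) < m := by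
  simp [firstSimple]

theorem firstSimple_mono (n : ℕ) {l m : ℕ} (h : l ≤ m) : firstSimple n l ⊆ firstSimple n m :=
  fun _ hi => mem_firstSimple.2 ((mem_firstSimple.1 hi).trans_le h)

theorem deltaSet_of_le {n r m : ℕ} (h : m ≤ r) : deltaSet n r m = firstSimple n m := by
  rw [deltaSet, if_neg (by omega), firstSimple]

namespace RootSystemData

variable {n : ℕ} {c : RootSystemData n}

/-! ### The elements `u_l^{(m)}` in type `A` -/

variable (c) in
theorem uElt_zero (m : ℕ) : c.uElt 0 m = 1 := by simp [uElt, uu]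

theorem uElt_succ {l m : ℕ} {k : Fin n} (h : (k : ℕ) + l + 1 = m) :
    c.uElt (l + 1) m = c.s k * c.uElt l m := by
  subst h
  have hfst : (k : ℕ) + l + 1 - (l + 1) + 1 = k + 1 := by omega
  have hsnd : (k : ℕ) + l + 1 - l + 1 = k + 1 + 1 := by omega
  have hlen : (k : ℕ) + l + 1 + 1 - (k + 1) = l + 1 := by omega
  have hlen' : (k : ℕ) + l + 1 + 1 - (k + 1 + 1) = l := by omega
  rw [uElt, uElt, uu, uu, hfst, hsnd, hlen, hlen', List.range'_succ, List.map_cons, List.prod_cons,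
    Nat.add_sub_cancel, sN, dif_pos k.2]

theorem uElt_mem_Wsub {l m : ℕ} (hl : l ≤ m) (hm : m ≤ n) :
    c.uElt l m ∈ c.Wsub (firstSimple n m) := by
  induction l with
  | zero => exact c.uElt_zero m ▸ one_mem _
  | succ l ih =>
    rw [uElt_succ (k := ⟨m - (l + 1), by omega⟩) (by simp only; omega)]
    exact mul_mem (s_mem_Wsub (by simp only [mem_firstSimple]; omega)) (ih (by omega))

theorem PathA.mono {l m : ℕ} (hA : c.PathA m) (h : l ≤ m) : c.PathA l :=
  fun i j hi hj => hA i j (hi.trans_le h) (hj.trans_le h)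

theorem PathA.act_s_sroot_of_far {m : ℕ} (hA : c.PathA m) {i j : Fin n} (hi : (i : ℕ) < m)
    (hj : (j : ℕ) < m) (h : (i : ℕ) + 2 ≤ j ∨ (j : ℕ) + 2 ≤ i) :
    c.act (c.s j) (c.sroot i) = c.sroot i := by
  rw [act_s_sroot, (hA i j hi hj).2 h, zero_smul, sub_zero]

theorem PathA.act_s_sroot_of_adjacent {m : ℕ} (hA : c.PathA m) {i j : Fin n} (hi : (i : ℕ) < m)
    (hj : (j : ℕ) < m) (h : (i : ℕ) + 1 = j ∨ (j : ℕ) + 1 = i) :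
    c.act (c.s j) (c.sroot i) = c.sroot i + c.sroot j := by
  rw [act_s_sroot, (hA i j hi hj).1 h, neg_one_smul, sub_neg_eq_add]

theorem PathA.act_uElt_sroot_of_far {m : ℕ} (hA : c.PathA m) {l : ℕ} {i : Fin n}
    (h : (i : ℕ) + l + 1 < m) (hm : m ≤ n) : c.act (c.uElt l m) (c.sroot i) = c.sroot i := by
  induction l with
  | zero => rw [uElt_zero, c.act_one]
  | succ l ih =>
    rw [uElt_succ (k := ⟨m - (l + 1), by omega⟩) (by simp only; omega), c.act_mul, ih (by omega)]
    exact hA.act_s_sroot_of_far (by omega) (by simp only; omega) (by simp only; omega)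

theorem PathA.act_uElt_sroot_of_mem {m : ℕ} (hA : c.PathA m) {l : ℕ} {i j : Fin n}
    (hij : (j : ℕ) = i + 1) (hj : (j : ℕ) < m) (hi : m ≤ i + l) (hl : l ≤ m) (hm : m ≤ n) :
    c.act (c.uElt l m) (c.sroot i) = c.sroot j := by
  induction l with
  | zero => omega
  | succ l ih =>
    obtain h | h : m ≤ i + l ∨ (i : ℕ) + l + 1 = m := by omega
    · rw [uElt_succ (k := ⟨m - (l + 1), by omega⟩) (by simp only; omega), c.act_mul,
        ih h (by omega)]
      exact hA.act_s_sroot_of_far hj (by simp only; omega) (by simp only; omega)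
    · obtain ⟨l, rfl⟩ : ∃ l', l = l' + 1 := ⟨l - 1, by omega⟩
      have hfar : c.act (c.uElt l m) (c.sroot i) = c.sroot i :=
        hA.act_uElt_sroot_of_far (by omega) hm
      rw [uElt_succ h, uElt_succ (k := j) (by omega), c.act_mul, c.act_mul, hfar,
        hA.act_s_sroot_of_adjacent (by omega) hj (by omega), act_add, act_s_self,
        hA.act_s_sroot_of_adjacent hj (by omega) (by omega)]
      abel

theorem s_mul_eq_mul_s {w : c.W} {i j : Fin n} (h : c.act w (c.sroot i) = c.sroot j) :
    c.s j * w = w * c.s i := by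
  have hconj := c.refl_act w _ (c.simple_mem i)
  rw [← sroot, h] at hconj
  rw [s, hconj, inv_mul_cancel_right, s]

/-! ### Minimal coset representatives in type `A` -/

theorem PathA.exists_uElt_mul {m : ℕ} (hA : c.PathA (m + 1)) (hm : m < n) {w : c.W}
    (hw : w ∈ c.Wsub (firstSimple n (m + 1))) :
    ∃ l ≤ m + 1, ∃ v ∈ c.Wsub (firstSimple n m), w = c.uElt l (m + 1) * v := by
  induction hw using Wsub_induction with
  | one => exact ⟨0, by omega, 1, one_mem _, by rw [uElt_zero, one_mul]⟩
  | s_mul j hj w _ ih =>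
    obtain ⟨l, hl, v, hv, rfl⟩ := ih
    rw [mem_firstSimple] at hj
    -- Position of `s_j` relative to `u_l = s_k ⋯ s_m` (`0`-based, `k = m + 1 - l`):
    -- `j < k - 1`, `j = k - 1`, `j = k`, `j > k`.
    obtain h | h | h | h : (j : ℕ) + l + 1 < m + 1 ∨ (j : ℕ) + l + 1 = m + 1 ∨
      (j : ℕ) + l = m + 1 ∨ m + 1 < j + l := by omega
    · refine ⟨l, hl, c.s j * v, mul_mem (s_mem_Wsub (by rw [mem_firstSimple]; omega)) hv, ?_⟩
      rw [← mul_assoc, s_mul_eq_mul_s (hA.act_uElt_sroot_of_far h hm), mul_assoc]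
    · exact ⟨l + 1, by omega, v, hv, by rw [uElt_succ h, mul_assoc]⟩
    · obtain ⟨l, rfl⟩ : ∃ l', l = l' + 1 := ⟨l - 1, by omega⟩
      refine ⟨l, by omega, v, hv, ?_⟩
      rw [uElt_succ h, ← mul_assoc, ← mul_assoc, s_mul_s, one_mul]
    · let i : Fin n := ⟨j - 1, by omega⟩
      have hij : (j : ℕ) = i + 1 := by simp only [i]; omega
      refine ⟨l, hl, c.s i * v, mul_mem (s_mem_Wsub (by rw [mem_firstSimple]; omega)) hv, ?_⟩
      rw [← mul_assoc, s_mul_eq_mul_s (hA.act_uElt_sroot_of_mem hij hj (by omega) hl hm), mul_assoc]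

theorem PathA.act_uElt_inv_sroot_apply_last {m : ℕ} (hA : c.PathA (m + 1)) (hm : m < n) {l : ℕ}
    {k : Fin n} (hk : (k : ℕ) + l = m) :
    c.act (c.uElt l (m + 1))⁻¹ (c.sroot k) ⟨m, hm⟩ = 1 := by
  induction l generalizing k with
  | zero =>
    obtain rfl : k = ⟨m, hm⟩ := Fin.ext hk
    rw [uElt_zero, inv_one, c.act_one, sroot, Pi.single_eq_same]
  | succ l ih =>
    let k' : Fin n := ⟨k + 1, by omega⟩
    have hfar : c.act (c.uElt l (m + 1))⁻¹ (c.sroot k) = c.sroot k :=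
      c.act_inv_eq_iff.2 (hA.act_uElt_sroot_of_far (by omega) hm).symm
    have hne : (⟨m, hm⟩ : Fin n) ≠ k := fun h => by
      have := congrArg Fin.val h
      simp only at this
      omega
    rw [uElt_succ (k := k') (by simp only [k']; omega), mul_inv_rev, c.act_mul, s_inv,
      hA.act_s_sroot_of_adjacent (by omega) (by simp only [k']; omega) (Or.inl rfl), act_add,
      hfar, Pi.add_apply, ih (by simp only [k']; omega), sroot, Pi.single_eq_of_ne hne, zero_add]

theorem PathA.len_uElt_mul {m : ℕ} (hA : c.PathA (m + 1)) (hm : m < n) {l : ℕ} (hl : l ≤ m + 1)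
    {v : c.W} (hv : v ∈ c.Wsub (firstSimple n m)) :
    c.len (c.uElt l (m + 1) * v) = l + c.len v := by
  induction l with
  | zero => rw [uElt_zero, one_mul, zero_add]
  | succ l ih =>
    let k : Fin n := ⟨m - l, by omega⟩
    have hk : (k : ℕ) + l = m := by simp only [k]; omega
    have hcoeff : c.act (c.uElt l (m + 1) * v)⁻¹ (c.sroot k) ⟨m, hm⟩ = 1 := by
      rw [mul_inv_rev, c.act_mul, act_apply_of_mem_Wsub (inv_mem hv) (by simp),
        hA.act_uElt_inv_sroot_apply_last hm hk]
    have hpos : 0 ≤ c.act (c.uElt l (m + 1) * v)⁻¹ (c.sroot k) :=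
      nonneg_of_apply_pos (c.act_mem _ _ (c.simple_mem k)) (hcoeff ▸ one_pos)
    rw [uElt_succ (k := k) (by omega), mul_assoc, len_s_mul hpos, ih (by omega)]
    omega

theorem PathA.len_uElt {m : ℕ} (hA : c.PathA (m + 1)) (hm : m < n) {l : ℕ} (hl : l ≤ m + 1) :
    c.len (c.uElt l (m + 1)) = l := by
  simpa [len_eq_zero_iff.2 rfl] using hA.len_uElt_mul hm hl (one_mem _)

theorem PathA.minRep_iff {m : ℕ} (hA : c.PathA (m + 1)) (hm : m < n) {w : c.W} :
    c.MinRep (firstSimple n (m + 1)) (firstSimple n m) w ↔ ∃ l ≤ m + 1, w = c.uElt l (m + 1) := by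
  constructor
  · rintro ⟨hw, hmin⟩
    obtain ⟨l, hl, v, hv, rfl⟩ := hA.exists_uElt_mul hm hw
    have hle := hmin v⁻¹ (inv_mem hv)
    rw [mul_inv_cancel_right, hA.len_uElt_mul hm hl hv, hA.len_uElt hm hl] at hle
    obtain rfl : v = 1 := len_eq_zero_iff.1 (by omega)
    exact ⟨l, hl, mul_one _⟩
  · rintro ⟨l, hl, rfl⟩
    refine ⟨uElt_mem_Wsub hl hm, fun u hu => ?_⟩
    rw [hA.len_uElt_mul hm hl hu, hA.len_uElt hm hl]
    exact Nat.le_add_right l _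

variable (c) in
/-- The product `u_{l_r}^{(r)} ⋯ u_{l_2}^{(2)} u_{l_1}^{(1)}`, where `l 0, …, l (r - 1)` stand for
`l_1, …, l_r`.  In type `A` it is the element of `W_{Δ_P}` of grading `l_1 e_1 + ⋯ + l_r e_r`. -/
def uProd {r : ℕ} (l : Fin r → ℕ) : c.W :=
  (List.ofFn fun k : Fin r => c.uElt (l k) (k + 1)).reverse.prod

theorem uProd_mem_Wsub {r : ℕ} (hr : r ≤ n) {l : Fin r → ℕ} (hl : ∀ k, l k ≤ k + 1) :
    c.uProd l ∈ c.Wsub (firstSimple n r) := by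
  refine Subgroup.list_prod_mem _ fun x hx => ?_
  obtain ⟨k, rfl⟩ := List.mem_ofFn.1 (List.mem_reverse.1 hx)
  exact Wsub_mono (firstSimple_mono n (by omega)) (uElt_mem_Wsub (hl k) (by omega))

theorem PathA.isDecomp_iff_of_last_eq_one {r : ℕ} (hA : c.PathA r) (hr : r ≤ n) {w : c.W}
    {v : Fin (r + 1) → c.W} (hv : v (Fin.last r) = 1) :
    c.IsDecomp r w v ↔ ∃ l : Fin r → ℕ, (∀ k, l k ≤ k + 1) ∧
      (∀ k : Fin r, v k.castSucc = c.uElt (l k) (k + 1)) ∧ w = c.uProd l := by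
  have hlast : c.MinRep (deltaSet n r (r + 1)) (deltaSet n r r) (v (Fin.last r)) := by
    rw [hv]
    exact ⟨one_mem _, fun u _ => by simp [len_eq_zero_iff.2 rfl]⟩
  have hinit (k : Fin r) : c.MinRep (deltaSet n r (k + 1)) (deltaSet n r k) (v k.castSucc) ↔
      ∃ l ≤ (k : ℕ) + 1, v k.castSucc = c.uElt l (k + 1) := by
    rw [deltaSet_of_le k.2, deltaSet_of_le k.2.le, (hA.mono k.2).minRep_iff (by omega)]
  have hprod : (List.ofFn v).reverse.prod =
      (List.ofFn fun k : Fin r => v k.castSucc).reverse.prod := by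
    rw [List.ofFn_succ', List.concat_eq_append, List.reverse_append, List.reverse_singleton,
      List.prod_append, List.prod_singleton, hv, one_mul]
  simp only [IsDecomp, Fin.forall_fin_succ', Fin.val_castSucc, Fin.val_last, hlast, and_true,
    hinit, Classical.skolem, forall_and, hprod, uProd]
  constructor
  · rintro ⟨⟨l, hl, hvl⟩, rfl⟩
    exact ⟨l, hl, hvl, by simp only [hvl]⟩
  · rintro ⟨l, hl, hvl, rfl⟩
    exact ⟨⟨l, hl, hvl⟩, by simp only [hvl]⟩

end RootSystemData

/-! ### Descending division with remainder -/

section Division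

variable {r : ℕ} (m : Fin r → ℕ) (b d : Fin r → ℤ)

/-- The successive quotients `q_k = ⌊(d_k + b_k q_{k+1}) / m_k⌋`, computed downwards from
`q_r = 0`. -/
def descQuot : Fin (r + 1) → ℤ := Fin.reverseInduction 0 fun k q => (d k + b k * q) / m k

/-- The remainders left by the divisions that define `descQuot`. -/
def descRem (k : Fin r) : ℕ := (d k + b k * descQuot m b d k.succ).natMod (m k)

theorem descQuot_last : descQuot m b d (Fin.last r) = 0 := Fin.reverseInduction_last ..

theorem descQuot_castSucc (k : Fin r) :
    descQuot m b d k.castSucc = (d k + b k * descQuot m b d k.succ) / m k :=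
  Fin.reverseInduction_castSucc ..

variable {m b d}

theorem descQuot_nonneg (hb : 0 ≤ b) (hd : 0 ≤ d) : 0 ≤ descQuot m b d := by
  intro k
  induction k using Fin.reverseInduction with
  | last => exact (descQuot_last m b d).ge
  | cast k ih =>
    rw [descQuot_castSucc]
    exact Int.ediv_nonneg (add_nonneg (hd k) (mul_nonneg (hb k) ih)) (Int.natCast_nonneg _)

theorem eq_descQuot_iff {q : Fin (r + 1) → ℤ} :
    q = descQuot m b d ↔
      q (Fin.last r) = 0 ∧ ∀ k : Fin r, q k.castSucc = (d k + b k * q k.succ) / m k := by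
  constructor
  · rintro rfl
    exact ⟨descQuot_last m b d, descQuot_castSucc m b d⟩
  · rintro ⟨hlast, hcast⟩
    funext k
    induction k using Fin.reverseInduction with
    | last => rw [hlast, descQuot_last]
    | cast k ih => rw [hcast, ih, descQuot_castSucc]

theorem natCast_add_mul_eq_iff {l m : ℕ} (hm : 0 < m) {x q : ℤ} :
    (l < m ∧ (l : ℤ) + m * q = x) ↔ q = x / m ∧ l = x.natMod m := by
  have hm' : (0 : ℤ) < m := Int.natCast_pos.2 hm
  have hmod : (x.natMod m : ℤ) = x % m := Int.toNat_of_nonneg (Int.emod_nonneg x hm'.ne')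
  have h := Int.ediv_emod_unique (a := x) (r := l) (q := q) hm'
  omega

theorem descending_division_iff (hm : ∀ k, 0 < m k) {q : Fin (r + 1) → ℤ}
    (hq : q (Fin.last r) = 0) {l : Fin r → ℕ} :
    (∀ k, l k < m k ∧ (l k : ℤ) + m k * q k.castSucc = d k + b k * q k.succ) ↔
      q = descQuot m b d ∧ l = descRem m b d := by
  simp only [natCast_add_mul_eq_iff (hm _), forall_and]
  constructor
  · rintro ⟨hquot, hrem⟩
    obtain rfl := eq_descQuot_iff.2 ⟨hq, hquot⟩
    exact ⟨rfl, funext hrem⟩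
  · rintro ⟨rfl, rfl⟩
    exact ⟨descQuot_castSucc m b d, fun _ => rfl⟩

end Division

/-! ### The grading equations -/

theorem grQ_last {r : ℕ} (i : Fin r) : grQ r i (Fin.last r) = 0 := by
  simp only [grQ, Fin.val_last]
  rw [if_neg (by omega), if_neg (by omega), add_zero]

theorem grQ_castSucc {r : ℕ} (i : Fin (r + 1)) (k : Fin r) :
    grQ r i k.castSucc =
      (if k.castSucc = i then (k : ℤ) + 2 else 0) - if k.succ = i then (k : ℤ) + 1 else 0 := by
  simp only [grQ, Fin.ext_iff, Fin.val_castSucc, Fin.val_succ]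
  split_ifs <;> omega

theorem sum_mul_grQ_castSucc {r : ℕ} {q : Fin (r + 1) → ℤ} (hq : q (Fin.last r) = 0) (k : Fin r) :
    ∑ i : Fin r, q i.castSucc * grQ r i k.castSucc =
      (k + 2) * q k.castSucc - (k + 1) * q k.succ := by
  calc ∑ i : Fin r, q i.castSucc * grQ r i k.castSucc
      = ∑ i : Fin (r + 1), q i * grQ r i k.castSucc := by simp [Fin.sum_univ_castSucc, hq]
    _ = (k + 2) * q k.castSucc - (k + 1) * q k.succ := by
      simp only [grQ_castSucc, mul_sub, mul_ite, mul_zero, Finset.sum_sub_distrib,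
        Finset.sum_ite_eq, Finset.mem_univ, if_true, mul_comm]

/-- The extension `(a_1, …, a_r, 0)` of the coefficients in `gr(w) + Σ a_i gr(q_{α_i^∨}) = d`:  the
`k`-th equation reads `ℓ(v_k) + (k + 1) a_k = d_k + k a_{k+1}` (`1`-based), with `ℓ(v_k) ≤ k`. -/
def gradingQuot {r : ℕ} (d : Fin r → ℤ) : Fin (r + 1) → ℤ :=
  descQuot (fun k => (k : ℕ) + 2) (fun k => (k : ℤ) + 1) d

/-- The lengths `ℓ(v_1), …, ℓ(v_r)` in the solution of `gr(w) + Σ a_i gr(q_{α_i^∨}) = d`. -/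
def gradingRem {r : ℕ} (d : Fin r → ℤ) : Fin r → ℕ :=
  descRem (fun k => (k : ℕ) + 2) (fun k => (k : ℤ) + 1) d

theorem gradingQuot_nonneg {r : ℕ} {d : Fin r → ℤ} (hd : 0 ≤ d) : 0 ≤ gradingQuot d :=
  descQuot_nonneg (fun k => by positivity) hd

theorem forall_add_sum_mul_grQ_iff {r : ℕ} {l : Fin r → ℕ} {a d : Fin r → ℤ} :
    (∀ k : Fin r, l k ≤ k + 1 ∧ (l k : ℤ) + ∑ i : Fin r, a i * grQ r i k.castSucc = d k) ↔
      l = gradingRem d ∧ a = fun k => gradingQuot d k.castSucc := by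
  let q : Fin (r + 1) → ℤ := Fin.snoc a 0
  have hq : q (Fin.last r) = 0 := Fin.snoc_last ..
  have ha : a = fun k => q k.castSucc := by simp [q]
  have hqa : q = gradingQuot d ↔ a = fun k => gradingQuot d k.castSucc := by
    have hlast : gradingQuot d (Fin.last r) = 0 := descQuot_last ..
    simp [ha, funext_iff, Fin.forall_fin_succ', hq, hlast]
  rw [← hqa, and_comm, gradingQuot, gradingRem, ← descending_division_iff (fun k => by omega) hq]
  simp only [ha, sum_mul_grQ_castSucc hq]
  refine forall_congr' fun k => and_congr (by omega) ?_
  push_cast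
  constructor <;> intro h <;> linarith

namespace RootSystemData

variable {n : ℕ} {c : RootSystemData n}

theorem PathA.exists_decomp_iff {r : ℕ} (hA : c.PathA r) (hr : r ≤ n) {w : c.W}
    {p : Fin r → ℕ → Prop} :
    (∃ v : Fin (r + 1) → c.W, c.IsDecomp r w v ∧ (∀ k : Fin r, p k (c.len (v k.castSucc))) ∧
      c.len (v (Fin.last r)) = 0) ↔
    ∃ l : Fin r → ℕ, (∀ k, l k ≤ k + 1 ∧ p k (l k)) ∧ w = c.uProd l := by
  have hlen {l : Fin r → ℕ} (hl : ∀ k, l k ≤ k + 1) (k : Fin r) :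
      c.len (c.uElt (l k) (k + 1)) = l k := (hA.mono k.2).len_uElt (by omega) (hl k)
  constructor
  · rintro ⟨v, hv, hp, hlast⟩
    obtain ⟨l, hl, hvl, rfl⟩ := (hA.isDecomp_iff_of_last_eq_one hr (len_eq_zero_iff.1 hlast)).1 hv
    exact ⟨l, fun k => ⟨hl k, hlen hl k ▸ hvl k ▸ hp k⟩, rfl⟩
  · rintro ⟨l, hlp, rfl⟩
    have hl : ∀ k, l k ≤ k + 1 := fun k => (hlp k).1
    let v : Fin (r + 1) → c.W := Fin.snoc (fun k : Fin r => c.uElt (l k) (k + 1)) 1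
    have hlast : v (Fin.last r) = 1 := Fin.snoc_last ..
    have hvl (k : Fin r) : v k.castSucc = c.uElt (l k) (k + 1) := Fin.snoc_castSucc ..
    refine ⟨v, (hA.isDecomp_iff_of_last_eq_one hr hlast).2 ⟨l, hl, hvl, rfl⟩, fun k => ?_,
      len_eq_zero_iff.2 hlast⟩
    rw [hvl, hlen hl]
    exact (hlp k).2

theorem PathA.grading_eq_iff {r : ℕ} (hA : c.PathA r) (hr : r ≤ n) {d a : Fin r → ℤ} {w : c.W} :
    (w ∈ c.Wsub (deltaSet n r r) ∧
      ∃ v : Fin (r + 1) → c.W, c.IsDecomp r w v ∧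
        ∀ k : Fin (r + 1), (c.len (v k) : ℤ) + ∑ i : Fin r, a i * grQ r (i : ℕ) k =
          (if h : (k : ℕ) < r then d ⟨(k : ℕ), h⟩ else 0)) ↔
      w = c.uProd (gradingRem d) ∧ a = fun k => gradingQuot d k.castSucc := by
  simp only [Fin.forall_fin_succ', Fin.val_castSucc, Fin.is_lt, dite_true, Fin.eta, Fin.val_last,
    lt_irrefl, dite_false, grQ_last, mul_zero, Finset.sum_const_zero, add_zero, Nat.cast_eq_zero,
    hA.exists_decomp_iff hr (p := fun k l => (l : ℤ) + ∑ i : Fin r, a i * grQ r i k.castSucc = d k),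
    forall_add_sum_mul_grQ_iff]
  rw [deltaSet_of_le le_rfl]
  constructor
  · rintro ⟨-, l, ⟨rfl, ha⟩, rfl⟩
    exact ⟨rfl, ha⟩
  · rintro ⟨rfl, ha⟩
    refine ⟨uProd_mem_Wsub hr fun k => ?_, _, ⟨rfl, ha⟩, rfl⟩
    exact (forall_add_sum_mul_grQ_iff.2 ⟨rfl, ha⟩ k).1

end RootSystemData

/-- For every `d ∈ ℤ^r` there is a unique pair of an element `w ∈ W_{Δ_P}` and
integers `a_1, …, a_r` with `gr(w) + Σ_i a_i · gr(q_{α_i^∨}) = Σ_i d_i e_i` in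
`ℤ^{r+1}`; moreover if all `d_i ≥ 0` then all `a_i ≥ 0`. -/
theorem grading_bijective_on_WP {n : ℕ} (c : RootSystemData n)
    (r : ℕ) (hr1 : 1 ≤ r) (hrn : r < n) (hA : c.PathA r)
    (d : Fin r → ℤ) :
    (∃! x : c.W × (Fin r → ℤ),
      x.1 ∈ c.Wsub (deltaSet n r r) ∧
      ∃ v : Fin (r + 1) → c.W, c.IsDecomp r x.1 v ∧
        ∀ k : Fin (r + 1),
          (c.len (v k) : ℤ) + ∑ i : Fin r, x.2 i * grQ r (i : ℕ) k =
            (if h : (k : ℕ) < r then d ⟨(k : ℕ), h⟩ else 0)) ∧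
    ((∀ i, 0 ≤ d i) →
      ∀ x : c.W × (Fin r → ℤ),
        (x.1 ∈ c.Wsub (deltaSet n r r) ∧
          ∃ v : Fin (r + 1) → c.W, c.IsDecomp r x.1 v ∧
            ∀ k : Fin (r + 1),
              (c.len (v k) : ℤ) + ∑ i : Fin r, x.2 i * grQ r (i : ℕ) k =
                (if h : (k : ℕ) < r then d ⟨(k : ℕ), h⟩ else 0)) →
        ∀ i, 0 ≤ x.2 i) := by
  simp only [hA.grading_eq_iff hrn.le]
  refine ⟨⟨(c.uProd (gradingRem d), fun k => gradingQuot d k.castSucc), ⟨rfl, rfl⟩, ?_⟩, ?_⟩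
  · rintro x ⟨hw, ha⟩
    exact Prod.ext hw ha
  · rintro hd x ⟨-, ha⟩ i
    rw [ha]
    exact gradingQuot_nonneg hd i.castSucc
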